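/- arXiv:1309.6030 — 4 statements merged into one kernel-verified Lean document; each statement's English description precedes it below -/
import Mathlib

section
/- Let u be the fine-scale solution and let u_W be the Galerkin solution on a subspace W ⊆ V. Suppose there are N linear functionals R₁, …, R_N : V → ℝ, linear maps E₁, …, E_N : V → V, positive constants λ₁, …, λ_N, nonnegative constants r₁, …, r_N, nonnegative functions t₁, …, t_N : V → ℝ, and a constant C_err > 0 such that for all v ∈ V: (i) ⟪u − u_W, v⟫ = Σ_{i=1}^{N} R_i(E_i v); (ii) |R_i(x)| ≤ r_i ‖x‖ for all x ∈ V; (iii) ‖E_i v‖ ≤ λ_i^{-1/2} t_i(v); and (iv) Σ_{i=1}^{N} t_i(v)² ≤ C_err ‖v‖². Then ‖u − u_W‖² ≤ C_err Σ_{i=1}^{N} r_i² λ_i^{-1}. -/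
open RealInnerProductSpace

/-- Abstract form of the a-posteriori error estimate (Theorem 4.1): if the
Galerkin error pairs against any `v` as a sum of local residuals `Rᵢ(Eᵢ v)`,
the `Rᵢ` are bounded by `rᵢ`, the local maps satisfy
`‖Eᵢ v‖ ≤ λᵢ^{-1/2} tᵢ(v)` and the local norms satisfy
`Σᵢ tᵢ(v)² ≤ C_err ‖v‖²`, then `‖u - u_W‖² ≤ C_err Σᵢ rᵢ² λᵢ⁻¹`. -/
theorem abstract_aposteriori_estimate
    {V : Type*} [NormedAddCommGroup V] [InnerProductSpace ℝ V]
    (F : V →ₗ[ℝ] ℝ) (W : Submodule ℝ V) (u uW : V)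
    (huW : uW ∈ W)
    (hfine : ∀ v : V, ⟪u, v⟫ = F v)
    (hgal : ∀ w ∈ W, ⟪uW, w⟫ = F w)
    (N : ℕ) (hN : 1 ≤ N)
    (R : Fin N → V →ₗ[ℝ] ℝ) (E : Fin N → V →ₗ[ℝ] V)
    (lam : Fin N → ℝ) (r : Fin N → ℝ) (t : Fin N → V → ℝ)
    (Cerr : ℝ)
    (hlam : ∀ i, 0 < lam i) (hr : ∀ i, 0 ≤ r i)
    (ht : ∀ i v, 0 ≤ t i v) (hCerr : 0 < Cerr)
    (h1 : ∀ v : V, ⟪u - uW, v⟫ = ∑ i, R i (E i v))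
    (h2 : ∀ i, ∀ x : V, |R i x| ≤ r i * ‖x‖)
    (h3 : ∀ i, ∀ v : V, ‖E i v‖ ≤ (Real.sqrt (lam i))⁻¹ * t i v)
    (h4 : ∀ v : V, ∑ i, (t i v) ^ 2 ≤ Cerr * ‖v‖ ^ 2) :
    ‖u - uW‖ ^ 2 ≤ Cerr * ∑ i, (r i) ^ 2 * (lam i)⁻¹ := by
  set e := u - uW with he
  have hS : (∑ i, (r i * (Real.sqrt (lam i))⁻¹) ^ 2) = ∑ i, (r i) ^ 2 * (lam i)⁻¹ := by
    refine Finset.sum_congr rfl fun i _ => ?_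
    rw [mul_pow, inv_pow, Real.sq_sqrt (hlam i).le]
  have hS0 : 0 ≤ ∑ i, (r i) ^ 2 * (lam i)⁻¹ :=
    Finset.sum_nonneg fun i _ => mul_nonneg (sq_nonneg _) (inv_nonneg.mpr (hlam i).le)
  have hb : ‖e‖ ^ 2 ≤ ∑ i, (r i * (Real.sqrt (lam i))⁻¹) * t i e := by
    rw [← real_inner_self_eq_norm_sq, h1 e]
    refine Finset.sum_le_sum fun i _ => ?_
    calc R i (E i e) ≤ |R i (E i e)| := le_abs_self _
      _ ≤ r i * ‖E i e‖ := h2 i _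
      _ ≤ r i * ((Real.sqrt (lam i))⁻¹ * t i e) := mul_le_mul_of_nonneg_left (h3 i e) (hr i)
      _ = _ := by ring
  have hcs := Finset.sum_mul_sq_le_sq_mul_sq Finset.univ
    (fun i => r i * (Real.sqrt (lam i))⁻¹) (fun i => t i e)
  rw [hS] at hcs
  have hsq : (‖e‖ ^ 2) ^ 2 ≤ (∑ i, (r i) ^ 2 * (lam i)⁻¹) * (Cerr * ‖e‖ ^ 2) :=
    (pow_le_pow_left₀ (sq_nonneg _) hb 2).trans
      (hcs.trans (mul_le_mul_of_nonneg_left (h4 e) hS0))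
  rcases (sq_nonneg ‖e‖).eq_or_lt with h0 | h0
  · rw [← h0]
    exact mul_nonneg hCerr.le hS0
  · refine le_of_mul_le_mul_right ?_ h0
    calc ‖e‖ ^ 2 * ‖e‖ ^ 2 = (‖e‖ ^ 2) ^ 2 := by ring
      _ ≤ _ := hsq
      _ = _ := by ring
end

section
/- Let W_m ⊆ W_{m+1} be subspaces of V with Galerkin solutions u_m ∈ W_m and u_{m+1} ∈ W_{m+1}, and define the residual functional R(v) = F(v) − ⟪u_m, v⟫. Let Π : V → V be a linear map whose range is contained in W_{m+1} and which satisfies ‖Π v‖ ≤ C_stab ‖v‖ for all v ∈ V, where C_stab ≥ 0, and suppose S ≥ 0 satisfies |R(v − Π v)| ≤ S ‖v‖ for all v ∈ V. Then |R(v)| ≤ (C_stab ‖u_{m+1} − u_m‖ + S) ‖v‖ for all v ∈ V. -/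
open RealInnerProductSpace

/-- Abstract content of Lemma 6.1 (efficiency of the residual indicator):
the dual norm of the residual at enrichment level `m` is bounded by the
energy norm of the solution update plus the correction term. -/
theorem residual_efficiency
    {V : Type*} [NormedAddCommGroup V] [InnerProductSpace ℝ V]
    (F : V →ₗ[ℝ] ℝ) (Wm Wm1 : Submodule ℝ V) (hW : Wm ≤ Wm1)
    (um um1 : V) (hum : um ∈ Wm) (hum1 : um1 ∈ Wm1)
    (hgalm : ∀ w ∈ Wm, ⟪um, w⟫ = F w)
    (hgalm1 : ∀ w ∈ Wm1, ⟪um1, w⟫ = F w)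
    (Pr : V →ₗ[ℝ] V) (hrange : ∀ v : V, Pr v ∈ Wm1)
    (Cstab S : ℝ) (hCstab : 0 ≤ Cstab) (hS : 0 ≤ S)
    (hstab : ∀ v : V, ‖Pr v‖ ≤ Cstab * ‖v‖)
    (hres : ∀ v : V, |F (v - Pr v) - ⟪um, v - Pr v⟫| ≤ S * ‖v‖) :
    ∀ v : V, |F v - ⟪um, v⟫| ≤ (Cstab * ‖um1 - um‖ + S) * ‖v‖ := by
  intro v
  have h1 := hres v
  have h2 := hgalm1 (Pr v) (hrange v)
  have h3 := abs_real_inner_le_norm (um1 - um) (Pr v)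
  have h4 := mul_le_mul_of_nonneg_left (hstab v) (norm_nonneg (um1 - um))
  rw [inner_sub_left, h2] at h3
  rw [map_sub, inner_sub_right] at h1
  rw [abs_le] at *
  constructor <;> linarith [h1.1, h1.2, h3.1, h3.2]
end

section
/- Let W_m ⊆ W_{m+1} be subspaces of V with Galerkin solutions u_m ∈ W_m and u_{m+1} ∈ W_{m+1}, and define R_m(w) = F(w) − ⟪u_m, w⟫ and R_{m+1}(w) = F(w) − ⟪u_{m+1}, w⟫. Let Π₁, Π₂ : V → V be linear maps and C_stab, κ, S, M ≥ 0 constants such that for all v ∈ V: ‖Π₂ v‖ ≤ C_stab ‖v‖, ‖Π₁ v − Π₂ v‖ ≤ κ ‖v‖, |R_m(v − Π₁ v)| ≤ S ‖v‖, and |R_m(v)| ≤ M ‖v‖. Then for all v ∈ V, |R_{m+1}(v − Π₂ v)| ≤ ( S + (1 + C_stab) ‖u_{m+1} − u_m‖ + κ M ) ‖v‖. -/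
open RealInnerProductSpace

/-- Abstract content of the recursive estimate of Lemma 6.2 for the
correction terms of the residuals at consecutive enrichment levels. -/
theorem residual_recursive_estimate
    {V : Type*} [NormedAddCommGroup V] [InnerProductSpace ℝ V]
    (F : V →ₗ[ℝ] ℝ) (Wm Wm1 : Submodule ℝ V) (hW : Wm ≤ Wm1)
    (um um1 : V) (hum : um ∈ Wm) (hum1 : um1 ∈ Wm1)
    (hgalm : ∀ w ∈ Wm, ⟪um, w⟫ = F w)
    (hgalm1 : ∀ w ∈ Wm1, ⟪um1, w⟫ = F w)
    (P1 P2 : V →ₗ[ℝ] V)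
    (Cstab kap S M : ℝ)
    (hCstab : 0 ≤ Cstab) (hkap : 0 ≤ kap) (hS : 0 ≤ S) (hM : 0 ≤ M)
    (h1 : ∀ v : V, ‖P2 v‖ ≤ Cstab * ‖v‖)
    (h2 : ∀ v : V, ‖P1 v - P2 v‖ ≤ kap * ‖v‖)
    (h3 : ∀ v : V, |F (v - P1 v) - ⟪um, v - P1 v⟫| ≤ S * ‖v‖)
    (h4 : ∀ v : V, |F v - ⟪um, v⟫| ≤ M * ‖v‖) :
    ∀ v : V, |F (v - P2 v) - ⟪um1, v - P2 v⟫|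
      ≤ (S + (1 + Cstab) * ‖um1 - um‖ + kap * M) * ‖v‖ := by
  intro v
  have e : F (v - P2 v) - ⟪um1, v - P2 v⟫
      = (F (v - P1 v) - ⟪um, v - P1 v⟫) + (F (P1 v - P2 v) - ⟪um, P1 v - P2 v⟫)
        - ⟪um1 - um, v - P2 v⟫ := by
    simp only [map_sub, inner_sub_left, inner_sub_right]
    ring
  have a := h3 v
  have b : |F (P1 v - P2 v) - ⟪um, P1 v - P2 v⟫| ≤ M * (kap * ‖v‖) :=
    (h4 _).trans (mul_le_mul_of_nonneg_left (h2 v) hM)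
  have n : ‖v - P2 v‖ ≤ ‖v‖ + Cstab * ‖v‖ :=
    (norm_sub_le _ _).trans (by linarith [h1 v])
  have c : |⟪um1 - um, v - P2 v⟫| ≤ ‖um1 - um‖ * (‖v‖ + Cstab * ‖v‖) :=
    (abs_real_inner_le_norm _ _).trans (mul_le_mul_of_nonneg_left n (norm_nonneg _))
  rw [e]
  rw [abs_le] at *
  constructor <;> nlinarith only [a.1, a.2, b.1, b.2, c.1, c.2]
end

section
/- Let θ ∈ (0,1), L₁ > 0, C_err > 0, τ > 0, δ ≥ 0, L₂ ≥ 0, and ρ ≥ 0 be real numbers satisfying 2 C_err/(τ L₁) + ρ < 1, and set ε = max( 1 − θ²/(L₁ (1 + τ δ L₂)), 2 C_err/(τ L₁) + ρ ). Then 0 < ε < 1, and for any nonnegative real numbers a, a', s, s' satisfying (i) a' ≤ (1 − θ²/L₁) a + (2 C_err/L₁) s, and (ii) s' ≤ ρ s + δ L₂ (a − a'), one has a' + (τ/(1 + τ δ L₂)) s' ≤ ε ( a + (τ/(1 + τ δ L₂)) s ). -/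
/-- Arithmetic core of Theorem 4.2 (contraction property of the adaptive
enrichment algorithm): with
`ε = max (1 - θ²/(L₁(1 + τδL₂))) (2C_err/(τL₁) + ρ)` one has `0 < ε < 1`,
and the contraction
`a' + (τ/(1+τδL₂)) s' ≤ ε (a + (τ/(1+τδL₂)) s)` holds whenever the two
one-step inequalities hold. -/
theorem adaptive_contraction
    (θ L1 Cerr τ δ L2 ρ : ℝ)
    (hθ0 : 0 < θ) (hθ1 : θ < 1) (hL1 : 0 < L1) (hCerr : 0 < Cerr)
    (hτ : 0 < τ) (hδ : 0 ≤ δ) (hL2 : 0 ≤ L2) (hρ : 0 ≤ ρ)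
    (hsum : 2 * Cerr / (τ * L1) + ρ < 1) :
    (0 < max (1 - θ ^ 2 / (L1 * (1 + τ * δ * L2))) (2 * Cerr / (τ * L1) + ρ) ∧
      max (1 - θ ^ 2 / (L1 * (1 + τ * δ * L2))) (2 * Cerr / (τ * L1) + ρ) < 1) ∧
    ∀ a a' s s' : ℝ, 0 ≤ a → 0 ≤ a' → 0 ≤ s → 0 ≤ s' →
      a' ≤ (1 - θ ^ 2 / L1) * a + (2 * Cerr / L1) * s →
      s' ≤ ρ * s + δ * L2 * (a - a') →
      a' + (τ / (1 + τ * δ * L2)) * s'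
        ≤ max (1 - θ ^ 2 / (L1 * (1 + τ * δ * L2))) (2 * Cerr / (τ * L1) + ρ) *
            (a + (τ / (1 + τ * δ * L2)) * s) := by
  have hk : 0 < 1 + τ * δ * L2 := by positivity
  have hq : 0 < 2 * Cerr / (τ * L1) := by positivity
  refine ⟨⟨lt_max_of_lt_right (by linarith), max_lt ?_ hsum⟩, ?_⟩
  · have : 0 < θ ^ 2 / (L1 * (1 + τ * δ * L2)) := by positivity
    linarith
  intro a a' s s' ha _ hs _ h1 h2
  have h3 : (1 + τ * δ * L2) * a' + τ * s' ≤
      (1 + τ * δ * L2 - θ ^ 2 / L1) * a + τ * (2 * Cerr / (τ * L1) + ρ) * s := by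
    have e : τ * (2 * Cerr / (τ * L1) + ρ) = 2 * Cerr / L1 + τ * ρ := by
      field_simp
    rw [e]
    have := mul_le_mul_of_nonneg_left h2 hτ.le
    linarith
  have e1 : a' + (τ / (1 + τ * δ * L2)) * s' =
      ((1 + τ * δ * L2) * a' + τ * s') / (1 + τ * δ * L2) := by
    field_simp
  have e2 : ((1 + τ * δ * L2 - θ ^ 2 / L1) * a + τ * (2 * Cerr / (τ * L1) + ρ) * s)
      / (1 + τ * δ * L2) = (1 - θ ^ 2 / (L1 * (1 + τ * δ * L2))) * a +
      (2 * Cerr / (τ * L1) + ρ) * ((τ / (1 + τ * δ * L2)) * s) := by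
    generalize 2 * Cerr / (τ * L1) + ρ = q
    generalize 1 + τ * δ * L2 = k at *
    field_simp
  have hts : 0 ≤ (τ / (1 + τ * δ * L2)) * s := by positivity
  rw [e1, mul_add]
  refine (div_le_div_of_nonneg_right h3 hk.le).trans (e2.le.trans ?_)
  exact add_le_add (mul_le_mul_of_nonneg_right (le_max_left _ _) ha)
    (mul_le_mul_of_nonneg_right (le_max_right _ _) hts)
end
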